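/- arXiv:math/0512195 — 2 statements merged into one kernel-verified Lean document; each statement's English description precedes it below -/
import Mathlib

section
/- Let μ, ν be finite Borel measures on E = [0,∞] and let f : E → ℝ be bounded measurable with |f(x) − f(y)| ≤ d(x,y) for all x, y ∈ E. Then |∫_E f dμ − ∫_E f dν| ≤ (|f(0)| + 1) · D(μ,ν). -/
/-! The height `Hr ν r` equals the cut `eraseCut ν r`, which is the generalised inverse of
`s ↦ ν (Iic s)` read from the top: `Hr ν r ≤ s ↔ ν univ - r ≤ ν (Iic s)`. Hence `r ↦ Hr ν r` pushes
Lebesgue measure on `[0, ν univ]` forward to `ν`, and `Hr ν r = 0` for `r ≥ ν univ`. Therefore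
`∫ f dν = f 0 * ν univ + ∫_{r ≥ 0} (f (Hr ν r) - f 0) dr`. Subtracting this identity for `μ` and `ν`
and applying the Lipschitz bound to `f (Hr μ r) - f (Hr ν r)` gives
`|∫ f dμ - ∫ f dν| ≤ |f 0| * |μ univ - ν univ| + ∫ |G (Hr μ r) - G (Hr ν r)| dr`. -/

open MeasureTheory Set Filter Topology ENNReal

noncomputable section

/-- `mH ν` is the supremum of the closed support of a Borel measure `ν` on `E = [0,∞]`
(a point is in the support iff every open neighbourhood has positive measure),
with the convention `sSup ∅ = 0`. -/
def mH (ν : Measure ℝ≥0∞) : ℝ≥0∞ :=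
  sSup {x : ℝ≥0∞ | ∀ U : Set ℝ≥0∞, IsOpen U → x ∈ U → 0 < ν U}

/-- The point at which the erased measure `k_a ν` is cut. -/
def eraseCut (ν : Measure ℝ≥0∞) (a : ℝ≥0∞) : ℝ≥0∞ :=
  sInf {s : ℝ≥0∞ | ν Set.univ - a ≤ ν (Set.Iic s)}

/-- The erased measure `k_a ν` : the measure `ν` erased by mass `a` backward from the top.
For a finite measure `ν` it is the unique finite measure satisfying
`eraseMass a ν (Set.Iic s) = min (ν (Set.Iic s)) (ν Set.univ - a)` for all `s`;
in particular it is `0` as soon as `a ≥ ν Set.univ`. -/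
def eraseMass (a : ℝ≥0∞) (ν : Measure ℝ≥0∞) : Measure ℝ≥0∞ :=
  ν.restrict (Set.Iio (eraseCut ν a)) +
    (ν Set.univ - a - ν (Set.Iio (eraseCut ν a))) • Measure.dirac (eraseCut ν a)

/-- `Hr ν r = H^ν_r = H^{k_r ν}`, the height of the measure `ν` erased by mass `r`. -/
def Hr (ν : Measure ℝ≥0∞) (r : ℝ≥0∞) : ℝ≥0∞ := mH (eraseMass r ν)

/-- The distance `D(μ,ν) = |⟨μ,1⟩ - ⟨ν,1⟩| + ∫₀^∞ d(H^μ_r, H^ν_r) dr` on finite measures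
on `E = [0,∞]`, where `d(x,y) = |G x - G y|`. -/
def Ddist (G : ℝ≥0∞ → ℝ) (μ ν : Measure ℝ≥0∞) : ℝ≥0∞ :=
  ENNReal.ofReal |(μ Set.univ).toReal - (ν Set.univ).toReal| +
    ∫⁻ r in Set.Ioi (0:ℝ),
      ENNReal.ofReal |G (Hr μ (ENNReal.ofReal r)) - G (Hr ν (ENNReal.ofReal r))|

lemma mH_le_iff (ρ : Measure ℝ≥0∞) (s : ℝ≥0∞) : mH ρ ≤ s ↔ ρ (Ioi s) = 0 := by
  constructor
  · intro h
    refine measure_null_of_locally_null _ fun x hx => ?_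
    by_contra! hcon
    have hxs : x ≤ s := by
      refine le_trans (le_sSup ?_) h
      intro U hU hxU
      exact pos_iff_ne_zero.2 (hcon U (mem_nhdsWithin_of_mem_nhds (hU.mem_nhds hxU)))
    exact absurd hx (not_lt.2 hxs)
  · intro h
    refine sSup_le fun x hx => ?_
    by_contra! hlt
    exact (hx (Ioi s) isOpen_Ioi hlt).ne' h

/-- The height of the erased measure is its cut. If the height were at most `s < eraseCut ν a`, then
`k_a ν` would vanish on `Ioi s`, so `Ioo s (eraseCut ν a)` would be `ν`-null and `Iio (eraseCut ν a)`
would already carry mass `ν univ - a`; then `s` would compete in the infimum defining the cut. -/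
lemma Hr_eq_eraseCut (ν : Measure ℝ≥0∞) (a : ℝ≥0∞) : Hr ν a = eraseCut ν a := by
  refine eq_of_forall_ge_iff fun s => ?_
  rw [Hr, mH_le_iff, eraseMass]
  rw [Measure.add_apply, Measure.smul_apply, Measure.restrict_apply measurableSet_Ioi,
    Measure.dirac_apply' _ measurableSet_Ioi]
  constructor
  · intro h
    by_contra! hlt
    simp only [add_eq_zero, smul_eq_mul, mem_Ioi, hlt, indicator_of_mem, Pi.one_apply, mul_one,
      tsub_eq_zero_iff_le] at h
    obtain ⟨h0, h1⟩ := h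
    refine hlt.not_ge (sInf_le ?_)
    calc ν univ - a ≤ ν (Iio (eraseCut ν a)) := h1
      _ ≤ ν (Iic s ∪ Ioi s ∩ Iio (eraseCut ν a)) := measure_mono fun x hx => by
          rcases le_or_gt x s with h | h
          · exact Or.inl h
          · exact Or.inr ⟨h, hx⟩
      _ ≤ ν (Iic s) + 0 := h0 ▸ measure_union_le _ _
      _ = ν (Iic s) := add_zero _
  · intro h
    have : Ioi s ∩ Iio (eraseCut ν a) = ∅ := by
      ext x
      simp only [mem_inter_iff, mem_Ioi, mem_Iio, mem_empty_iff_false, iff_false, not_and, not_lt]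
      exact fun hx => h.trans hx.le
    simp [this, h]

/-- The infimum defining the cut is attained, by right continuity of `s ↦ ν (Iic s)`. -/
lemma Hr_le_iff (ν : Measure ℝ≥0∞) [IsFiniteMeasure ν] (a s : ℝ≥0∞) :
    Hr ν a ≤ s ↔ ν univ - a ≤ ν (Iic s) := by
  rw [Hr_eq_eraseCut]
  refine ⟨fun h => ?_, fun h => sInf_le h⟩
  have hne : {s : ℝ≥0∞ | ν univ - a ≤ ν (Iic s)}.Nonempty := ⟨⊤, by simp⟩
  obtain ⟨u, hu, hlim, hmem⟩ := exists_seq_tendsto_sInf hne (OrderBot.bddBelow _)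
  have hI : ⋂ n, Iic (u n) = Iic (eraseCut ν a) := by
    ext x
    simp only [mem_iInter, mem_Iic]
    exact ⟨fun hx => ge_of_tendsto' hlim hx, fun hx n => hx.trans (sInf_le (hmem n))⟩
  have hm : Antitone fun n => Iic (u n) := fun i j hij => Iic_subset_Iic.2 (hu hij)
  have : ν univ - a ≤ ν (Iic (eraseCut ν a)) := by
    rw [← hI, hm.measure_iInter (fun _ => measurableSet_Iic.nullMeasurableSet)
      ⟨0, measure_ne_top _ _⟩]
    exact le_iInf hmem
  exact this.trans (measure_mono (Iic_subset_Iic.2 h))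

lemma Hr_antitone (ν : Measure ℝ≥0∞) [IsFiniteMeasure ν] : Antitone (Hr ν) := fun a b hab =>
  (Hr_le_iff ν b _).2 ((tsub_le_tsub_left hab _).trans ((Hr_le_iff ν a _).1 le_rfl))

lemma measurable_Hr_ofReal (ν : Measure ℝ≥0∞) [IsFiniteMeasure ν] :
    Measurable fun r : ℝ => Hr ν (ENNReal.ofReal r) :=
  (Hr_antitone ν).measurable.comp ENNReal.measurable_ofReal

lemma Hr_eq_zero (ν : Measure ℝ≥0∞) [IsFiniteMeasure ν] {r : ℝ} (hr : ν.real univ ≤ r) :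
    Hr ν (ENNReal.ofReal r) = 0 := by
  have : ν univ ≤ ENNReal.ofReal r := by
    rw [← ofReal_measureReal]; exact ENNReal.ofReal_le_ofReal hr
  rw [← nonpos_iff_eq_zero, Hr_le_iff, tsub_eq_zero_of_le this]
  exact zero_le

/-- Quantile representation: the heights push Lebesgue measure on `[0, ν univ]` forward to `ν`. -/
lemma map_Hr (ν : Measure ℝ≥0∞) [IsFiniteMeasure ν] :
    (volume.restrict (Icc 0 (ν.real univ))).map (fun r : ℝ => Hr ν (ENNReal.ofReal r)) = ν := by
  refine Measure.ext_of_Iic _ _ fun s => ?_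
  rw [Measure.map_apply (measurable_Hr_ofReal ν) measurableSet_Iic,
    Measure.restrict_apply (measurable_Hr_ofReal ν measurableSet_Iic)]
  have hle : ν.real (Iic s) ≤ ν.real univ := measureReal_mono (subset_univ _)
  have : (fun r : ℝ => Hr ν (ENNReal.ofReal r)) ⁻¹' Iic s ∩ Icc 0 (ν.real univ)
      = Icc (ν.real univ - ν.real (Iic s)) (ν.real univ) := by
    ext r
    simp only [mem_inter_iff, mem_preimage, mem_Iic, mem_Icc, Hr_le_iff]
    have key : 0 ≤ r → (ν univ - ENNReal.ofReal r ≤ ν (Iic s) ↔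
        ν.real univ - ν.real (Iic s) ≤ r) := fun h0 => by
      rw [tsub_le_iff_right, ← ofReal_measureReal (μ := ν) (s := univ),
        ← ofReal_measureReal (μ := ν) (s := Iic s), ← ENNReal.ofReal_add measureReal_nonneg h0,
        ENNReal.ofReal_le_ofReal_iff (add_nonneg measureReal_nonneg h0), sub_le_iff_le_add']
    constructor
    · rintro ⟨h, h0, h1⟩
      exact ⟨(key h0).1 h, h1⟩
    · rintro ⟨h, h1⟩
      have h0 : 0 ≤ r := by linarith
      exact ⟨(key h0).2 h, h0, h1⟩
  rw [this, Real.volume_Icc, _root_.sub_sub_cancel, ofReal_measureReal]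

lemma integrableOn_comp_Hr (ν : Measure ℝ≥0∞) [IsFiniteMeasure ν] {g : ℝ≥0∞ → ℝ}
    (hg : Measurable g) {C : ℝ} (hC : ∀ x, |g x| ≤ C) (hg0 : g 0 = 0) :
    IntegrableOn (fun r : ℝ => g (Hr ν (ENNReal.ofReal r))) (Ici 0) := by
  refine IntegrableOn.of_forall_sdiff_eq_zero (s := Icc 0 (ν.real univ)) ?_ measurableSet_Ici ?_
  · exact Measure.integrableOn_of_bounded (M := C) measure_Icc_lt_top.ne
      (hg.comp (measurable_Hr_ofReal ν)).aestronglyMeasurable (ae_of_all _ fun r => hC _)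
  · rintro r ⟨h0, h1⟩
    rw [Hr_eq_zero ν (le_of_lt (not_le.1 fun h => h1 ⟨h0, h⟩)), hg0]

lemma integral_comp_Hr (ν : Measure ℝ≥0∞) [IsFiniteMeasure ν] {g : ℝ≥0∞ → ℝ}
    (hg : Measurable g) (hg0 : g 0 = 0) :
    ∫ r in Ici (0 : ℝ), g (Hr ν (ENNReal.ofReal r)) = ∫ x, g x ∂ν := by
  conv_rhs => rw [← map_Hr ν]
  rw [integral_map (measurable_Hr_ofReal ν).aemeasurable hg.aestronglyMeasurable]
  refine setIntegral_eq_of_subset_of_forall_sdiff_eq_zero measurableSet_Ici Icc_subset_Ici_self ?_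
  rintro r ⟨h0, h1⟩
  rw [Hr_eq_zero ν (le_of_lt (not_le.1 fun h => h1 ⟨h0, h⟩)), hg0]

/-- If `f : E → ℝ` is bounded measurable with `|f x - f y| ≤ d(x,y)`, then
`|∫ f dμ - ∫ f dν| ≤ (|f 0| + 1) * D(μ,ν)`. -/
theorem abs_integral_sub_le_Ddist (G : ℝ≥0∞ → ℝ) (hGc : Continuous G) (hGm : StrictMono G)
    (hG0 : G 0 = 0) (hG1 : G ⊤ ≤ 1)
    (μ ν : Measure ℝ≥0∞) [IsFiniteMeasure μ] [IsFiniteMeasure ν]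
    (f : ℝ≥0∞ → ℝ) (hfm : Measurable f) (hfb : ∃ C, ∀ x, |f x| ≤ C)
    (hfLip : ∀ x y : ℝ≥0∞, |f x - f y| ≤ |G x - G y|) :
    |(∫ x, f x ∂μ) - ∫ x, f x ∂ν| ≤ (|f 0| + 1) * (Ddist G μ ν).toReal := by
  obtain ⟨C, hC⟩ := hfb
  have hGb : ∀ x, |G x| ≤ 1 := fun x => by
    have h0 : 0 ≤ G x := hG0 ▸ hGm.monotone zero_le
    rw [abs_of_nonneg h0]
    exact (hGm.monotone le_top).trans hG1
  have hgm : Measurable fun x => f x - f 0 := hfm.sub_const _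
  have hgb : ∀ x, |f x - f 0| ≤ C + C := fun x =>
    (abs_sub _ _).trans (add_le_add (hC _) (hC _))
  have hint : ∀ ρ : Measure ℝ≥0∞, IsFiniteMeasure ρ → ∫ x, f x ∂ρ =
      (∫ r in Ici (0 : ℝ), (f (Hr ρ (ENNReal.ofReal r)) - f 0)) + ρ.real univ * f 0 := by
    intro ρ _
    have hfi : Integrable f ρ :=
      Integrable.of_bound hfm.aestronglyMeasurable C (ae_of_all _ hC)
    rw [integral_comp_Hr ρ hgm (sub_self _), integral_sub hfi (integrable_const _),
      integral_const, smul_eq_mul, sub_add_cancel]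
  have hGμ := integrableOn_comp_Hr μ hGc.measurable hGb hG0
  have hGν := integrableOn_comp_Hr ν hGc.measurable hGb hG0
  have hGi := (hGμ.sub hGν).abs
  set I := ∫ r in Ici (0 : ℝ), |G (Hr μ (ENNReal.ofReal r)) - G (Hr ν (ENNReal.ofReal r))| with hI
  have hI0 : 0 ≤ I := integral_nonneg fun _ => abs_nonneg _
  have hD : (Ddist G μ ν).toReal = |μ.real univ - ν.real univ| + I := by
    have : ∫⁻ r in Ioi (0 : ℝ),
        ENNReal.ofReal |G (Hr μ (ENNReal.ofReal r)) - G (Hr ν (ENNReal.ofReal r))|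
        = ENNReal.ofReal I := by
      rw [Measure.restrict_congr_set Ioi_ae_eq_Ici]
      exact (ofReal_integral_eq_lintegral_ofReal hGi (ae_of_all _ fun _ => abs_nonneg _)).symm
    rw [Ddist, this, ← ENNReal.ofReal_add (abs_nonneg _) hI0,
      ENNReal.toReal_ofReal (add_nonneg (abs_nonneg _) hI0)]
    rfl
  have hdiff : |(∫ r in Ici (0 : ℝ), (f (Hr μ (ENNReal.ofReal r)) - f 0))
      - ∫ r in Ici (0 : ℝ), (f (Hr ν (ENNReal.ofReal r)) - f 0)| ≤ I := by
    rw [← integral_sub (integrableOn_comp_Hr μ hgm hgb (sub_self _))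
      (integrableOn_comp_Hr ν hgm hgb (sub_self _)), ← Real.norm_eq_abs]
    refine norm_integral_le_of_norm_le hGi (ae_of_all _ fun r => ?_)
    rw [Real.norm_eq_abs, sub_sub_sub_cancel_right]
    exact hfLip _ _
  rw [hint μ inferInstance, hint ν inferInstance, hD, add_sub_add_comm, ← sub_mul]
  calc _ ≤ _ := abs_add_le _ _
    _ ≤ I + |μ.real univ - ν.real univ| * |f 0| := by rw [abs_mul]; gcongr
    _ ≤ _ := by
      nlinarith [mul_nonneg (abs_nonneg (f 0)) hI0, abs_nonneg (μ.real univ - ν.real univ)]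
end
end

section
/- For finite Borel measures μ_n (n ≥ 1) and μ on E = [0,∞], the sequence (μ_n) converges weakly to μ (i.e. ∫ f dμ_n → ∫ f dμ for every bounded continuous f : E → ℝ) if and only if D(μ_n, μ) → 0. In other words, the metric D induces the topology of weak convergence on the set of finite measures on E. -/
/-! The height `Hr ν r` of the erased measure is the upper quantile function `eraseCut ν r` of `ν`
(`Hr_eq`), which satisfies the Galois relation `eraseCut ν r ≤ s ↔ ν (Ioi s) ≤ r`
(`eraseCut_le_iff`). The theorem thus compares weak convergence with `L¹` convergence of
quantile functions, seen through `G`.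

*Weak convergence implies `D → 0`.* Testing against Urysohn functions between half-lines
(`exists_urysohn`) and using the Galois relation, the quantile functions of `μs n` converge to that
of `μ` at each continuity point of the latter, hence almost everywhere, as it is antitone
(`tendsto_eraseCut`). All quantile functions vanish beyond a common bound of the total masses and
`0 ≤ G ≤ 1`, so dominated convergence applies.

*`D → 0` implies weak convergence.* Under Lebesgue measure on `[0, M)`, with `M ≥ ν univ`, the
quantile function has law `ν + (M - ν univ) • δ₀` (`map_eraseCut`). For continuous `f`, compactness
of `[0,∞]` gives `|f x - f y| ≤ ε + C |G x - G y|` for a constant `C` depending on `ε`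
(`exists_modulus`). Integrating this along the two quantile functions bounds
`|∫ f ∂(μs n) - ∫ f ∂μ|` by `|f 0|` times the difference of the masses, plus `ε M`, plus
`C` times the integral part of `D`. -/

open MeasureTheory Set Filter Topology ENNReal

noncomputable section

/-! ### The erased height as a quantile function -/

/-- Galois relation for the quantile function; the direct implication is right-continuity of
`s ↦ ν (Ioi s)`. -/
lemma eraseCut_le_iff (ν : Measure ℝ≥0∞) [IsFiniteMeasure ν] (a s : ℝ≥0∞) :
    eraseCut ν a ≤ s ↔ ν (Ioi s) ≤ a := by
  have key : ∀ t, ν univ - a ≤ ν (Iic t) ↔ ν (Ioi t) ≤ a := by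
    intro t
    have h : ν univ = ν (Iic t) + ν (Ioi t) := by
      rw [← measure_add_measure_compl (μ := ν) (measurableSet_Iic (a := t)), compl_Iic]
    rw [tsub_le_iff_left, h, add_comm a]
    exact ENNReal.add_le_add_iff_left (measure_ne_top ν _)
  unfold eraseCut
  simp_rw [key]
  constructor
  · intro h
    have h1 : ∀ t, s < t → ν (Ioi t) ≤ a := by
      intro t ht
      obtain ⟨u, hu, hut⟩ := sInf_lt_iff.1 (h.trans_lt ht)
      exact (measure_mono (Ioi_subset_Ioi hut.le)).trans hu
    rcases eq_or_ne s ⊤ with rfl | hs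
    · simp
    obtain ⟨u, hu, hus, hut⟩ := exists_seq_strictAnti_tendsto' (lt_top_iff_ne_top.2 hs)
    have hU : Ioi s = ⋃ n, Ioi (u n) := by
      ext x
      simp only [mem_Ioi, mem_iUnion]
      constructor
      · intro hx
        exact (hut.eventually (gt_mem_nhds hx)).exists
      · rintro ⟨n, hn⟩
        exact (hus n).1.trans hn
    have hmono : Monotone fun n => Ioi (u n) := fun i j hij => Ioi_subset_Ioi (hu.antitone hij)
    rw [hU, hmono.measure_iUnion]
    exact iSup_le fun n => h1 _ (hus n).1
  · intro h
    exact sInf_le h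

lemma eraseCut_le_iff_real (ν : Measure ℝ≥0∞) [IsFiniteMeasure ν] {r : ℝ} (hr : 0 ≤ r)
    (s : ℝ≥0∞) : eraseCut ν (ENNReal.ofReal r) ≤ s ↔ ν.real (Ioi s) ≤ r := by
  rw [eraseCut_le_iff, Measure.real, ENNReal.le_ofReal_iff_toReal_le (measure_ne_top _ _) hr]

lemma eraseCut_antitone (ν : Measure ℝ≥0∞) [IsFiniteMeasure ν] :
    Antitone fun r : ℝ => eraseCut ν (ENNReal.ofReal r) := by
  intro r r' h
  simp only
  rw [eraseCut_le_iff]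
  exact ((eraseCut_le_iff ν _ _).1 le_rfl).trans (ENNReal.ofReal_le_ofReal h)

lemma eraseCut_eq_zero (ν : Measure ℝ≥0∞) [IsFiniteMeasure ν] {a : ℝ≥0∞} (h : ν univ ≤ a) :
    eraseCut ν a = 0 := by
  rw [← nonpos_iff_eq_zero, eraseCut_le_iff]
  exact (measure_mono (subset_univ _)).trans h

/-- The height of the erased measure is its cutting point: the erased measure lives on
`Iic (eraseCut ν a)`, and when it is nonzero it charges every neighbourhood of `eraseCut ν a`. -/
lemma Hr_eq (ν : Measure ℝ≥0∞) [IsFiniteMeasure ν] (a : ℝ≥0∞) : Hr ν a = eraseCut ν a := by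
  set c := eraseCut ν a with hc
  have hdef : eraseMass a ν = ν.restrict (Iio c) + (ν univ - a - ν (Iio c)) • Measure.dirac c := rfl
  unfold Hr mH
  apply le_antisymm
  · refine sSup_le fun x hx => ?_
    by_contra! hlt
    have := hx (Ioi c) isOpen_Ioi hlt
    rw [hdef] at this
    simp [Measure.restrict_apply measurableSet_Ioi, Ioi_inter_Iio] at this
  · rcases le_or_gt (ν univ) a with ha | ha
    · rw [hc, eraseCut_eq_zero ν ha]; exact zero_le
    apply le_sSup
    intro U hU hcU
    rw [hdef]
    simp only [Measure.add_apply, Measure.smul_apply, smul_eq_mul,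
      Measure.restrict_apply hU.measurableSet, Measure.dirac_apply' _ hU.measurableSet,
      indicator_of_mem hcU, Pi.one_apply, mul_one]
    by_contra! h0
    obtain ⟨h1, h2⟩ := add_eq_zero.1 (nonpos_iff_eq_zero.1 h0)
    rw [tsub_eq_zero_iff_le] at h2
    have hpos : 0 < ν univ - a := tsub_pos_of_lt ha
    -- there is mass below `c`, so `c > 0` and `U` contains an interval `Ioc l c`
    have hc0 : 0 < c := by
      rw [pos_iff_ne_zero]
      intro h
      rw [h] at h2
      simp at h2
      exact hpos.not_ge (by simpa using h2)
    obtain ⟨l, hl, hlU⟩ := exists_Ioc_subset_of_mem_nhds (hU.mem_nhds hcU) ⟨0, hc0⟩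
    have h3 : ν (Ioo l c) = 0 := by
      refine measure_mono_null (fun x hx => ?_) h1
      exact ⟨hlU ⟨hx.1, hx.2.le⟩, hx.2⟩
    have h4 : ν univ - a ≤ ν (Iic l) := by
      calc _ ≤ ν (Iio c) := h2
        _ ≤ ν (Iic l ∪ Ioo l c) := measure_mono fun x hx => by
            rcases le_or_gt x l with h | h
            · exact Or.inl h
            · exact Or.inr ⟨h, hx⟩
        _ ≤ _ := measure_union_le _ _
        _ = _ := by rw [h3, add_zero]
    exact (sInf_le h4 : c ≤ l).not_gt hl

/-! ### Weak convergence implies convergence of quantile functions -/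

/-- A continuous function lying between the indicators of `Ici t` and `Ioi s`. -/
lemma exists_urysohn {s t : ℝ≥0∞} (h : s < t) :
    ∃ f : ℝ≥0∞ → ℝ, Continuous f ∧ (∃ C, ∀ x, |f x| ≤ C) ∧
      ∀ (ν : Measure ℝ≥0∞) [IsFiniteMeasure ν],
        ν.real (Ici t) ≤ ∫ x, f x ∂ν ∧ ∫ x, f x ∂ν ≤ ν.real (Ioi s) := by
  obtain ⟨f, f0, f1, f01⟩ := exists_continuous_zero_one_of_isClosed
    (isClosed_Iic (a := s)) (isClosed_Ici (a := t))
    (Set.disjoint_left.2 fun x (hx : x ≤ s) (hx' : t ≤ x) => (hx.trans_lt h).not_ge hx')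
  have hb : ∀ x, |f x| ≤ 1 := fun x => by
    rw [abs_of_nonneg (f01 x).1]; exact (f01 x).2
  refine ⟨f, f.continuous, ⟨1, hb⟩, fun ν _ => ?_⟩
  have hi : Integrable f ν :=
    Integrable.of_bound f.continuous.aestronglyMeasurable 1 (Eventually.of_forall hb)
  constructor
  · rw [← integral_indicator_one measurableSet_Ici]
    refine integral_mono ((integrable_const (1:ℝ)).indicator measurableSet_Ici) hi fun x => ?_
    by_cases hx : x ∈ Ici t
    · simp [indicator_of_mem hx, f1 hx]
    · simp [indicator_of_notMem hx, (f01 x).1]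
  · rw [← integral_indicator_one measurableSet_Ioi]
    refine integral_mono hi ((integrable_const (1:ℝ)).indicator measurableSet_Ioi) fun x => ?_
    by_cases hx : x ∈ Ioi s
    · simp [indicator_of_mem hx, (f01 x).2]
    · simp [indicator_of_notMem hx, f0 (not_lt.1 hx : x ≤ s)]

/-- Under weak convergence, quantile functions converge at every continuity point of the limiting
quantile function. -/
lemma tendsto_eraseCut (μs : ℕ → Measure ℝ≥0∞) (μ : Measure ℝ≥0∞)
    [∀ n, IsFiniteMeasure (μs n)] [IsFiniteMeasure μ]
    (H : ∀ f : ℝ≥0∞ → ℝ, Continuous f → (∃ C, ∀ x, |f x| ≤ C) →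
        Tendsto (fun n => ∫ x, f x ∂(μs n)) atTop (𝓝 (∫ x, f x ∂μ)))
    {r : ℝ} (hr : 0 < r) (hcont : ContinuousAt (fun r : ℝ => eraseCut μ (ENNReal.ofReal r)) r) :
    Tendsto (fun n => eraseCut (μs n) (ENNReal.ofReal r)) atTop
      (𝓝 (eraseCut μ (ENNReal.ofReal r))) := by
  rw [tendsto_order]
  constructor
  · intro s hs
    obtain ⟨t, hst, ht⟩ := exists_between hs
    obtain ⟨f, fc, fb, hf⟩ := exists_urysohn hst
    have h1 : r < ∫ x, f x ∂μ := by
      have := (eraseCut_le_iff_real μ hr.le t).not.1 ht.not_ge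
      exact (not_le.1 this).trans_le ((measureReal_mono Ioi_subset_Ici_self).trans (hf μ).1)
    filter_upwards [(H f fc fb).eventually (lt_mem_nhds h1)] with n hn
    rw [← not_le, eraseCut_le_iff_real _ hr.le, not_le]
    exact hn.trans_le (hf _).2
  · intro s hs
    obtain ⟨t, ht, hts⟩ := exists_between hs
    obtain ⟨u, htt, htu⟩ := exists_between hts
    obtain ⟨f, fc, fb, hf⟩ := exists_urysohn htt
    -- continuity provides `r' < r` whose quantile is still below `t`
    have h2 : ∃ r', 0 ≤ r' ∧ r' < r ∧ eraseCut μ (ENNReal.ofReal r') < t := by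
      have e1 : ∀ᶠ x in 𝓝[<] r, eraseCut μ (ENNReal.ofReal x) < t :=
        nhdsWithin_le_nhds (hcont.eventually (gt_mem_nhds ht))
      have e2 : ∀ᶠ x in 𝓝[<] r, (0:ℝ) < x := nhdsWithin_le_nhds (lt_mem_nhds hr)
      obtain ⟨x, hx1, hx2, hx3⟩ := (e1.and (e2.and self_mem_nhdsWithin)).exists
      exact ⟨x, hx2.le, hx3, hx1⟩
    obtain ⟨r', hnn, hlt, hqt⟩ := h2
    have h1 : ∫ x, f x ∂μ < r :=
      ((hf μ).2.trans ((eraseCut_le_iff_real μ hnn t).1 hqt.le)).trans_lt hlt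
    filter_upwards [(H f fc fb).eventually (gt_mem_nhds h1)] with n hn
    refine lt_of_le_of_lt ?_ htu
    rw [eraseCut_le_iff_real _ hr.le]
    exact ((measureReal_mono Ioi_subset_Ici_self).trans (hf _).1).trans hn.le

/-! ### Integrals along quantile functions -/

/-- Inverse transform sampling: the law of the quantile function under Lebesgue measure on `[0, M)`.
The extra mass at `0` comes from the values `r ≥ ν univ`. -/
lemma map_eraseCut (ν : Measure ℝ≥0∞) [IsFiniteMeasure ν] {M : ℝ} (hM : ν.real univ ≤ M) :
    (volume.restrict (Ico (0:ℝ) M)).map (fun r : ℝ => eraseCut ν (ENNReal.ofReal r)) =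
      ν + ENNReal.ofReal (M - ν.real univ) • Measure.dirac 0 := by
  have hmeas : Measurable (fun r : ℝ => eraseCut ν (ENNReal.ofReal r)) :=
    (eraseCut_antitone ν).measurable
  apply Measure.ext_of_Iic
  intro s
  have hset : (fun r : ℝ => eraseCut ν (ENNReal.ofReal r)) ⁻¹' Iic s ∩ Ico 0 M =
      Ico (ν.real (Ioi s)) M := by
    ext r
    simp only [mem_inter_iff, mem_preimage, mem_Iic, mem_Ico]
    constructor
    · rintro ⟨h1, h2, h3⟩
      exact ⟨(eraseCut_le_iff_real ν h2 s).1 h1, h3⟩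
    · rintro ⟨h1, h2⟩
      have h0 : 0 ≤ r := measureReal_nonneg.trans h1
      exact ⟨(eraseCut_le_iff_real ν h0 s).2 h1, h0, h2⟩
  rw [Measure.map_apply hmeas measurableSet_Iic,
    Measure.restrict_apply (hmeas measurableSet_Iic), hset, Real.volume_Ico]
  have h : ν.real (Iic s) + ν.real (Ioi s) = ν.real univ := by
    rw [← compl_Iic, measureReal_add_measureReal_compl measurableSet_Iic]
  have h5 : M - ν.real (Ioi s) = ν.real (Iic s) + (M - ν.real univ) := by linarith
  rw [h5, ENNReal.ofReal_add measureReal_nonneg (by linarith)]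
  simp [Measure.real, ENNReal.ofReal_toReal]

/-- On the compact space `[0,∞]`, every continuous function is uniformly continuous with respect
to the metric `|G x - G y|`; here with an affine modulus of continuity. -/
lemma exists_modulus (G : ℝ≥0∞ → ℝ) (hGc : Continuous G) (hGm : StrictMono G)
    (f : ℝ≥0∞ → ℝ) (hf : Continuous f) {ε : ℝ} (hε : 0 < ε) :
    ∃ C, 0 ≤ C ∧ ∀ x y, |f x - f y| ≤ ε + C * |G x - G y| := by
  have hF : Continuous fun p : ℝ≥0∞ × ℝ≥0∞ => |f p.1 - f p.2| := by fun_prop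
  have hGG : Continuous fun p : ℝ≥0∞ × ℝ≥0∞ => |G p.1 - G p.2| := by fun_prop
  set K := {p : ℝ≥0∞ × ℝ≥0∞ | ε ≤ |f p.1 - f p.2|} with hK
  have hKc : IsCompact K := (isClosed_le continuous_const hF).isCompact
  rcases K.eq_empty_or_nonempty with he | hne
  · refine ⟨0, le_rfl, fun x y => ?_⟩
    have : (x, y) ∉ K := by rw [he]; exact notMem_empty _
    simp only [hK, mem_ofPred_eq, not_le] at this
    simpa using this.le
  · obtain ⟨p, hp, hpmin⟩ := hKc.exists_isMinOn hne hGG.continuousOn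
    obtain ⟨b, -, hbmax⟩ := hKc.exists_isMaxOn hne hF.continuousOn
    have hpos : 0 < |G p.1 - G p.2| := by
      rw [abs_pos, sub_ne_zero]
      intro h
      have := hGm.injective h
      have hp' : ε ≤ |f p.1 - f p.2| := hp
      rw [this] at hp'
      simp at hp'
      linarith
    refine ⟨|f b.1 - f b.2| / |G p.1 - G p.2|, by positivity, fun x y => ?_⟩
    by_cases hxy : (x, y) ∈ K
    · have h1 : |f x - f y| ≤ |f b.1 - f b.2| := hbmax hxy
      have h2 : |G p.1 - G p.2| ≤ |G x - G y| := hpmin hxy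
      have h3 : |f b.1 - f b.2| ≤ |f b.1 - f b.2| / |G p.1 - G p.2| * |G x - G y| := by
        rw [div_mul_eq_mul_div, le_div_iff₀ hpos]
        gcongr
      linarith
    · simp only [hK, mem_ofPred_eq, not_le] at hxy
      have : 0 ≤ |f b.1 - f b.2| / |G p.1 - G p.2| * |G x - G y| := by positivity
      linarith

lemma integral_eraseCut (ν : Measure ℝ≥0∞) [IsFiniteMeasure ν] {M : ℝ} (hM : ν.real univ ≤ M)
    (f : ℝ≥0∞ → ℝ) (hf : Continuous f) {B : ℝ} (hB : ∀ x, |f x| ≤ B) :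
    ∫ r in Ico (0:ℝ) M, f (eraseCut ν (ENNReal.ofReal r)) =
      ∫ x, f x ∂ν + (M - ν.real univ) * f 0 := by
  have hmeas : Measurable (fun r : ℝ => eraseCut ν (ENNReal.ofReal r)) :=
    (eraseCut_antitone ν).measurable
  have hint : ∀ (ρ : Measure ℝ≥0∞) [IsFiniteMeasure ρ], Integrable f ρ := fun ρ _ =>
    Integrable.of_bound hf.aestronglyMeasurable B (Eventually.of_forall hB)
  rw [← integral_map (φ := fun r : ℝ => eraseCut ν (ENNReal.ofReal r)) hmeas.aemeasurable
    hf.aestronglyMeasurable, map_eraseCut ν hM,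
    integral_add_measure (hint _) ((hint _).smul_measure ENNReal.ofReal_ne_top),
    integral_smul_measure, integral_dirac, ENNReal.toReal_ofReal (by linarith), smul_eq_mul]

lemma abs_G_sub_le (G : ℝ≥0∞ → ℝ) (hGm : StrictMono G) (hG0 : G 0 = 0) (hG1 : G ⊤ ≤ 1)
    (x y : ℝ≥0∞) : |G x - G y| ≤ 1 := by
  have h0 : ∀ z, 0 ≤ G z := fun z => hG0 ▸ hGm.monotone zero_le
  have h1 : ∀ z, G z ≤ 1 := fun z => (hGm.monotone le_top).trans hG1
  rw [abs_le]
  constructor <;> linarith [h0 x, h0 y, h1 x, h1 y]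

/-- The quantitative estimate behind `D → 0 ⟹` weak convergence: `Δ` bounds the integral part of
`D`. -/
lemma abs_integral_sub_le (G : ℝ≥0∞ → ℝ) (hGm : StrictMono G)
    (hG0 : G 0 = 0) (hG1 : G ⊤ ≤ 1) (ν μ : Measure ℝ≥0∞) [IsFiniteMeasure ν] [IsFiniteMeasure μ]
    {M : ℝ} (hν : ν.real univ ≤ M) (hμ : μ.real univ ≤ M)
    (f : ℝ≥0∞ → ℝ) (hf : Continuous f) {B : ℝ} (hB : ∀ x, |f x| ≤ B)
    {ε C : ℝ} (hC : 0 ≤ C) (hmod : ∀ x y, |f x - f y| ≤ ε + C * |G x - G y|)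
    {Δ : ℝ≥0∞} (hΔt : Δ ≠ ⊤) (hΔ : ∫⁻ r in Ioi (0:ℝ), ENNReal.ofReal
      |G (Hr ν (ENNReal.ofReal r)) - G (Hr μ (ENNReal.ofReal r))| ≤ Δ) :
    |∫ x, f x ∂ν - ∫ x, f x ∂μ| ≤
      |ν.real univ - μ.real univ| * |f 0| + (ε * M + C * Δ.toReal) := by
  have hM0 : 0 ≤ M := measureReal_nonneg.trans hν
  have hm : ∀ (ρ : Measure ℝ≥0∞) [IsFiniteMeasure ρ],
      Measurable (fun r : ℝ => eraseCut ρ (ENNReal.ofReal r)) :=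
    fun ρ _ => (eraseCut_antitone ρ).measurable
  have hfi : ∀ (ρ : Measure ℝ≥0∞) [IsFiniteMeasure ρ],
      IntegrableOn (fun r : ℝ => f (eraseCut ρ (ENNReal.ofReal r))) (Ico 0 M) := fun ρ _ =>
    Integrable.of_bound (hf.measurable.comp (hm ρ)).aestronglyMeasurable B
      (Eventually.of_forall fun _ => hB _)
  have hGmeas : Measurable fun r : ℝ =>
      |G (eraseCut ν (ENNReal.ofReal r)) - G (eraseCut μ (ENNReal.ofReal r))| :=
    ((hGm.monotone.measurable.comp (hm ν)).sub (hGm.monotone.measurable.comp (hm μ))).abs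
  have hGi : IntegrableOn (fun r : ℝ =>
      |G (eraseCut ν (ENNReal.ofReal r)) - G (eraseCut μ (ENNReal.ofReal r))|) (Ico 0 M) :=
    Integrable.of_bound hGmeas.aestronglyMeasurable 1
      (Eventually.of_forall fun _ => by
        rw [Real.norm_eq_abs, abs_abs]
        exact abs_G_sub_le G hGm hG0 hG1 _ _)
  have hGle : ∫ r in Ico (0:ℝ) M,
      |G (eraseCut ν (ENNReal.ofReal r)) - G (eraseCut μ (ENNReal.ofReal r))| ≤ Δ.toReal := by
    rw [integral_eq_lintegral_of_nonneg_ae (Eventually.of_forall fun _ => abs_nonneg _)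
      hGmeas.aestronglyMeasurable]
    refine ENNReal.toReal_mono hΔt (le_trans ?_ hΔ)
    simp_rw [Hr_eq]
    rw [setLIntegral_congr Ioo_ae_eq_Ico.symm]
    exact lintegral_mono_set Ioo_subset_Ioi_self
  have hmain : |∫ r in Ico (0:ℝ) M, (f (eraseCut ν (ENNReal.ofReal r)) -
      f (eraseCut μ (ENNReal.ofReal r)))| ≤ ε * M + C * Δ.toReal := by
    calc _ ≤ ∫ r in Ico (0:ℝ) M, |f (eraseCut ν (ENNReal.ofReal r)) -
          f (eraseCut μ (ENNReal.ofReal r))| := abs_integral_le_integral_abs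
      _ ≤ ∫ r in Ico (0:ℝ) M, (ε + C * |G (eraseCut ν (ENNReal.ofReal r)) -
          G (eraseCut μ (ENNReal.ofReal r))|) :=
        integral_mono ((hfi ν).sub (hfi μ)).abs ((integrable_const ε).add (hGi.const_mul C))
          fun r => hmod _ _
      _ = ε * M + C * ∫ r in Ico (0:ℝ) M, |G (eraseCut ν (ENNReal.ofReal r)) -
          G (eraseCut μ (ENNReal.ofReal r))| := by
        rw [integral_add (integrable_const ε) (hGi.const_mul C), integral_const_mul]
        simp [hM0, mul_comm]
      _ ≤ _ := by gcongr
  rw [integral_sub (hfi ν) (hfi μ), integral_eraseCut ν hν f hf hB,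
    integral_eraseCut μ hμ f hf hB] at hmain
  have heq : ∫ x, f x ∂ν - ∫ x, f x ∂μ = (ν.real univ - μ.real univ) * f 0 +
      (∫ x, f x ∂ν + (M - ν.real univ) * f 0 - (∫ x, f x ∂μ + (M - μ.real univ) * f 0)) := by ring
  rw [heq]
  refine (abs_add_le _ _).trans ?_
  rw [abs_mul]
  gcongr

/-! ### The two implications -/

/-- If the total masses converge, they admit a common bound. -/
lemma exists_mass_bound (μs : ℕ → Measure ℝ≥0∞) (μ : Measure ℝ≥0∞)
    (h : Tendsto (fun n => (μs n).real univ) atTop (𝓝 (μ.real univ))) :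
    ∃ M, (∀ n, (μs n).real univ ≤ M) ∧ μ.real univ ≤ M := by
  obtain ⟨M, hM⟩ := h.bddAbove_range
  have hM' : ∀ n, (μs n).real univ ≤ M := fun n => hM (mem_range_self n)
  exact ⟨M, hM', le_of_tendsto' h hM'⟩

lemma Ddist_tendsto_of_weak (G : ℝ≥0∞ → ℝ) (hGc : Continuous G) (hGm : StrictMono G)
    (hG0 : G 0 = 0) (hG1 : G ⊤ ≤ 1) (μs : ℕ → Measure ℝ≥0∞) (μ : Measure ℝ≥0∞)
    [∀ n, IsFiniteMeasure (μs n)] [IsFiniteMeasure μ]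
    (H : ∀ f : ℝ≥0∞ → ℝ, Continuous f → (∃ C, ∀ x, |f x| ≤ C) →
        Tendsto (fun n => ∫ x, f x ∂(μs n)) atTop (𝓝 (∫ x, f x ∂μ))) :
    Tendsto (fun n => Ddist G (μs n) μ) atTop (𝓝 0) := by
  have hmass : Tendsto (fun n => (μs n).real univ) atTop (𝓝 (μ.real univ)) := by
    simpa using H (fun _ => 1) continuous_const ⟨1, fun _ => by simp⟩
  obtain ⟨M, hM, hMμ⟩ := exists_mass_bound μs μ hmass
  have hm : ∀ (ρ : Measure ℝ≥0∞) [IsFiniteMeasure ρ],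
      Measurable (fun r : ℝ => G (eraseCut ρ (ENNReal.ofReal r))) :=
    fun ρ _ => hGm.monotone.measurable.comp (eraseCut_antitone ρ).measurable
  have h1 : Tendsto (fun n => ENNReal.ofReal |(μs n univ).toReal - (μ univ).toReal|) atTop
      (𝓝 0) := by
    have : Tendsto (fun n => |(μs n).real univ - μ.real univ|) atTop (𝓝 0) := by
      simpa using (hmass.sub_const (μ.real univ)).abs
    simpa [Measure.real] using ENNReal.tendsto_ofReal this
  have h2 : Tendsto (fun n => ∫⁻ r in Ioi (0:ℝ), ENNReal.ofReal
      |G (eraseCut (μs n) (ENNReal.ofReal r)) - G (eraseCut μ (ENNReal.ofReal r))|) atTop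
      (𝓝 0) := by
    have := tendsto_lintegral_of_dominated_convergence (μ := volume.restrict (Ioi (0:ℝ)))
      (F := fun n r => ENNReal.ofReal
        |G (eraseCut (μs n) (ENNReal.ofReal r)) - G (eraseCut μ (ENNReal.ofReal r))|)
      (f := fun _ => 0) ((Iio M).indicator fun _ => 1)
      (fun n => ((hm (μs n)).sub (hm μ)).abs.ennreal_ofReal) ?_ ?_ ?_
    · simpa using this
    · intro n
      refine Eventually.of_forall fun r => ?_
      by_cases hr : r < M
      · simpa [indicator_of_mem (show r ∈ Iio M from hr)] using
          abs_G_sub_le G hGm hG0 hG1 _ _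
      · have hz : ∀ (ρ : Measure ℝ≥0∞) [IsFiniteMeasure ρ], ρ.real univ ≤ M →
            eraseCut ρ (ENNReal.ofReal r) = 0 := by
          intro ρ _ hρ
          apply eraseCut_eq_zero
          rw [← ENNReal.ofReal_toReal (measure_ne_top ρ univ)]
          exact ENNReal.ofReal_le_ofReal (hρ.trans (not_lt.1 hr))
        simp [hz _ (hM n), hz _ hMμ]
    · rw [lintegral_indicator measurableSet_Iio]
      simp [Iio_inter_Ioi]
    · rw [ae_restrict_iff' measurableSet_Ioi]
      filter_upwards [(eraseCut_antitone μ).countable_not_continuousAt.ae_notMem volume]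
        with r hr hr0
      have hc := not_not.1 hr
      have := (hGc.tendsto _).comp (tendsto_eraseCut μs μ H hr0 hc)
      have h3 := (this.sub_const (G (eraseCut μ (ENNReal.ofReal r)))).abs
      simpa using ENNReal.tendsto_ofReal h3
  unfold Ddist
  simp_rw [Hr_eq]
  simpa using h1.add h2

lemma weak_of_Ddist_tendsto (G : ℝ≥0∞ → ℝ) (hGc : Continuous G) (hGm : StrictMono G)
    (hG0 : G 0 = 0) (hG1 : G ⊤ ≤ 1) (μs : ℕ → Measure ℝ≥0∞) (μ : Measure ℝ≥0∞)
    [∀ n, IsFiniteMeasure (μs n)] [IsFiniteMeasure μ]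
    (H : Tendsto (fun n => Ddist G (μs n) μ) atTop (𝓝 0))
    (f : ℝ≥0∞ → ℝ) (hf : Continuous f) {B : ℝ} (hB : ∀ x, |f x| ≤ B) :
    Tendsto (fun n => ∫ x, f x ∂(μs n)) atTop (𝓝 (∫ x, f x ∂μ)) := by
  have hDr : Tendsto (fun n => (Ddist G (μs n) μ).toReal) atTop (𝓝 0) := by
    simpa [Function.comp_def] using (ENNReal.tendsto_toReal ENNReal.zero_ne_top).comp H
  have hfin : ∀ᶠ n in atTop, Ddist G (μs n) μ ≠ ⊤ := by
    filter_upwards [H.eventually (gt_mem_nhds ENNReal.zero_lt_top)] with n hn using hn.ne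
  have hmassle : ∀ᶠ n in atTop, |(μs n).real univ - μ.real univ| ≤ (Ddist G (μs n) μ).toReal := by
    filter_upwards [hfin] with n hn
    exact (ENNReal.ofReal_le_iff_le_toReal hn).1 le_self_add
  have hmass0 : Tendsto (fun n => |(μs n).real univ - μ.real univ|) atTop (𝓝 0) :=
    squeeze_zero' (Eventually.of_forall fun _ => abs_nonneg _) hmassle hDr
  have hmass : Tendsto (fun n => (μs n).real univ) atTop (𝓝 (μ.real univ)) := by
    rw [tendsto_iff_norm_sub_tendsto_zero]
    exact hmass0
  obtain ⟨M, hM, hMμ⟩ := exists_mass_bound μs μ hmass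
  have hM0 : 0 ≤ M := measureReal_nonneg.trans hMμ
  rw [Metric.tendsto_atTop']
  intro δ hδ
  -- choose `ε` with `ε * M < δ`
  have hε : 0 < δ / (M + 1) := by positivity
  obtain ⟨C, hC, hmod⟩ := exists_modulus G hGc hGm f hf hε
  have hlim : Tendsto (fun n => |(μs n).real univ - μ.real univ| * |f 0| +
      (δ / (M + 1) * M + C * (Ddist G (μs n) μ).toReal)) atTop (𝓝 (δ / (M + 1) * M)) := by
    simpa using (hmass0.mul_const |f 0|).add ((hDr.const_mul C).const_add (δ / (M + 1) * M))
  have hlt : δ / (M + 1) * M < δ := by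
    rw [div_mul_eq_mul_div, div_lt_iff₀ (by positivity)]
    nlinarith
  obtain ⟨N, hN⟩ := eventually_atTop.1 ((hlim.eventually (gt_mem_nhds hlt)).and hfin)
  refine ⟨N, fun n hn => ?_⟩
  rw [Real.dist_eq]
  exact (abs_integral_sub_le G hGm hG0 hG1 (μs n) μ (hM n) hMμ f hf hB hC hmod
    (hN n hn.le).2 le_add_self).trans_lt (hN n hn.le).1

/-- `(μ_n)` converges weakly to `μ` (integrals of bounded continuous functions
converge) if and only if `D(μ_n, μ) → 0` : the metric `D` induces the topology of weak
convergence on the finite measures on `E = [0,∞]`. -/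
theorem weak_conv_iff_Ddist_tendsto_zero (G : ℝ≥0∞ → ℝ) (hGc : Continuous G) (hGm : StrictMono G)
    (hG0 : G 0 = 0) (hG1 : G ⊤ ≤ 1)
    (g : ℝ → ℝ) (hgG : ∀ t : ℝ, g t = G (ENNReal.ofReal t))
    (hgC1 : ContDiffOn ℝ 1 g (Set.Ici 0))
    (μs : ℕ → Measure ℝ≥0∞) (μ : Measure ℝ≥0∞)
    [∀ n, IsFiniteMeasure (μs n)] [IsFiniteMeasure μ] :
    (∀ f : ℝ≥0∞ → ℝ, Continuous f → (∃ C, ∀ x, |f x| ≤ C) →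
        Tendsto (fun n => ∫ x, f x ∂(μs n)) atTop (𝓝 (∫ x, f x ∂μ)))
      ↔ Tendsto (fun n => Ddist G (μs n) μ) atTop (𝓝 0) := by
  constructor
  · exact Ddist_tendsto_of_weak G hGc hGm hG0 hG1 μs μ
  · rintro H f hf ⟨B, hB⟩
    exact weak_of_Ddist_tendsto G hGc hGm hG0 hG1 μs μ H f hf hB
end
end
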